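/- Define G(x) = (2/√π) ∫_0^x e^{−y²} dy and g(x) = (2/√π) e^{−x²}. Let C > 0, W > 0, and D₁, D₂ ≥ 0 with D₁ + D₂ > 0, and define F(x) = C x² − D₁ log G(x) − D₂ log G(Wx) for x > 0. Then F is strictly convex on (0,∞), F(x) → +∞ as x → 0⁺ and as x → ∞, and F attains its unique global minimum on (0,∞) at the unique point x₀ > 0 satisfying the stationarity equation 2C x₀ = D₁ g(x₀)/G(x₀) + D₂ W g(Wx₀)/G(Wx₀). -/

import Mathlib

open Filter Topology

/-- The error-function normalization `G(x) = (2/√π) ∫_0^x e^{−y²} dy`. -/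
noncomputable def erfG (x : ℝ) : ℝ := (2 / Real.sqrt Real.pi) * ∫ y in (0:ℝ)..x, Real.exp (-y ^ 2)

/-- `g(x) = (2/√π) e^{−x²}`, the derivative of `erfG`. -/
noncomputable def erfg (x : ℝ) : ℝ := (2 / Real.sqrt Real.pi) * Real.exp (-x ^ 2)

lemma aux_c_pos : 0 < 2 / Real.sqrt Real.pi := by
  have := Real.pi_pos
  positivity

lemma aux_erfg_pos (x : ℝ) : 0 < erfg x := mul_pos aux_c_pos (Real.exp_pos _)

lemma aux_cont : Continuous (fun y : ℝ => Real.exp (-y ^ 2)) := by fun_prop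

lemma aux_hasDerivAt (x : ℝ) : HasDerivAt erfG (erfg x) x :=
  (intervalIntegral.integral_hasDerivAt_right (aux_cont.intervalIntegrable _ _)
    (aux_cont.stronglyMeasurableAtFilter _ _) aux_cont.continuousAt).const_mul _

lemma aux_strictMono : StrictMono erfG :=
  strictMono_of_hasDerivAt_pos aux_hasDerivAt aux_erfg_pos

lemma aux_zero : erfG 0 = 0 := by simp [erfG]

lemma aux_pos {x : ℝ} (hx : 0 < x) : 0 < erfG x := by
  have := aux_strictMono hx
  rwa [aux_zero] at this

lemma aux_le_one {x : ℝ} (hx : 0 < x) : erfG x ≤ 1 := by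
  have h1 : ∫ y in (0:ℝ)..x, Real.exp (-y ^ 2) ≤ Real.sqrt Real.pi / 2 := by
    have h2 := integral_gaussian_Ioi 1
    have h3 := integrable_exp_neg_mul_sq (b := 1) one_pos
    simp only [neg_mul, one_mul, div_one] at h2 h3
    rw [intervalIntegral.integral_of_le hx.le, ← h2]
    exact MeasureTheory.setIntegral_mono_set h3.integrableOn
      (Eventually.of_forall fun y => (Real.exp_pos _).le)
      (Set.Ioc_subset_Ioi_self).eventuallyLE
  have hp : 0 < Real.sqrt Real.pi := Real.sqrt_pos.2 Real.pi_pos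
  calc erfG x ≤ 2 / Real.sqrt Real.pi * (Real.sqrt Real.pi / 2) :=
        mul_le_mul_of_nonneg_left h1 aux_c_pos.le
    _ = 1 := by field_simp

lemma aux_erfg_anti {x y : ℝ} (hx : 0 < x) (hxy : x ≤ y) : erfg y ≤ erfg x := by
  refine mul_le_mul_of_nonneg_left (Real.exp_le_exp.2 ?_) aux_c_pos.le
  nlinarith

lemma aux_ratio_anti {x y : ℝ} (hx : 0 < x) (hxy : x ≤ y) :
    erfg y / erfG y ≤ erfg x / erfG x :=
  div_le_div₀ (aux_erfg_pos x).le (aux_erfg_anti hx hxy) (aux_pos hx)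
    (aux_strictMono.monotone hxy)

lemma aux_log_tendsto {W : ℝ} (hW : 0 < W) :
    Tendsto (fun x => Real.log (erfG (W * x))) (𝓝[>] 0) atBot := by
  refine Real.tendsto_log_nhdsGT_zero.comp ?_
  refine tendsto_nhdsWithin_iff.2 ⟨?_, ?_⟩
  · have hc : Continuous fun x => erfG (W * x) :=
      (continuous_iff_continuousAt.2 fun x => (aux_hasDerivAt x).continuousAt).comp
        (continuous_const.mul continuous_id)
    have := hc.tendsto 0
    simp only [mul_zero, aux_zero] at this
    exact this.mono_left nhdsWithin_le_nhds
  · filter_upwards [self_mem_nhdsWithin] with x hx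
    exact aux_pos (mul_pos hW hx)

/-- `F(x) = Cx² − D₁ log G(x) − D₂ log G(Wx)` is strictly convex on `(0,∞)`,
blows up at `0⁺` and at `∞`, and attains its unique global minimum on `(0,∞)` at the unique
point `x₀ > 0` satisfying `2Cx₀ = D₁ g(x₀)/G(x₀) + D₂ W g(Wx₀)/G(Wx₀)`. -/
theorem external_angle_exponent_function_properties
    (C W D₁ D₂ : ℝ) (hC : 0 < C) (hW : 0 < W)
    (hD₁ : 0 ≤ D₁) (hD₂ : 0 ≤ D₂) (hD : 0 < D₁ + D₂)
    (F : ℝ → ℝ)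
    (hF : ∀ x, F x = C * x ^ 2 - D₁ * Real.log (erfG x) - D₂ * Real.log (erfG (W * x))) :
    StrictConvexOn ℝ (Set.Ioi 0) F ∧
    Tendsto F (𝓝[>] 0) atTop ∧
    Tendsto F atTop atTop ∧
    ∃! x₀ : ℝ, 0 < x₀ ∧
      2 * C * x₀ = D₁ * erfg x₀ / erfG x₀ + D₂ * W * erfg (W * x₀) / erfG (W * x₀) ∧
      ∀ x, 0 < x → x ≠ x₀ → F x₀ < F x := by
  have hd : ∀ x, 0 < x → HasDerivAt F (2 * C * x - (D₁ * erfg x / erfG x +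
      D₂ * W * erfg (W * x) / erfG (W * x))) x := by
    intro x hx
    have e : F = fun x => C * x ^ 2 - D₁ * Real.log (erfG x) - D₂ * Real.log (erfG (W * x)) :=
      funext hF
    rw [e]
    have hl := (hasDerivAt_id x).const_mul W
    have h1 := ((aux_hasDerivAt x).log (aux_pos hx).ne').const_mul D₁
    have h2 := (((aux_hasDerivAt (W * x)).comp x hl).log (aux_pos (mul_pos hW hx)).ne').const_mul D₂
    have h0 := (hasDerivAt_pow 2 x).const_mul C
    refine HasDerivAt.congr_deriv (f := fun x => C * x ^ 2 - D₁ * Real.log (erfG x) - D₂ * Real.log (erfG (W * x))) ((h0.sub h1).sub h2) ?_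
    simp only [Function.comp, Nat.cast_ofNat]
    ring
  have hcont : ContinuousOn F (Set.Ioi 0) := fun x hx =>
    (hd x hx).continuousAt.continuousWithinAt
  have hconv : StrictConvexOn ℝ (Set.Ioi 0) F := by
    refine StrictMonoOn.strictConvexOn_of_deriv (convex_Ioi 0) hcont ?_
    rw [interior_Ioi]
    intro x hx y hy hxy
    simp only [Set.mem_Ioi] at hx hy
    rw [(hd x hx).deriv, (hd y hy).deriv]
    have a1 := mul_le_mul_of_nonneg_left (aux_ratio_anti hx hxy.le) hD₁
    have a2 := mul_le_mul_of_nonneg_left (aux_ratio_anti (mul_pos hW hx)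
      (mul_le_mul_of_nonneg_left hxy.le hW.le)) (mul_nonneg hD₂ hW.le)
    have a3 : C * x < C * y := mul_lt_mul_of_pos_left hxy hC
    simp only [← mul_div_assoc] at a1 a2
    linarith
  have hl : ∀ x, 0 < x → Real.log (erfG x) ≤ 0 := fun x hx =>
    Real.log_nonpos (aux_pos hx).le (aux_le_one hx)
  have hb1 : ∀ x, 0 < x → 0 ≤ -(D₁ * Real.log (erfG x)) := fun x hx => by
    have := mul_nonneg hD₁ (neg_nonneg.2 (hl x hx))
    linarith
  have hb2 : ∀ x, 0 < x → 0 ≤ -(D₂ * Real.log (erfG (W * x))) := fun x hx => by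
    have := mul_nonneg hD₂ (neg_nonneg.2 (hl _ (mul_pos hW hx)))
    linarith
  have ht0 : Tendsto F (𝓝[>] 0) atTop := by
    rcases hD₁.lt_or_eq with h | h
    · have t := (aux_log_tendsto one_pos).const_mul_atBot h
      refine tendsto_atTop_mono' _ ?_ (tendsto_neg_atBot_atTop.comp t)
      filter_upwards [self_mem_nhdsWithin] with x hx
      have := hb2 x hx
      have : 0 ≤ C * x ^ 2 := by positivity
      simp only [Function.comp, one_mul, hF]
      linarith
    · have h' : 0 < D₂ := by linarith
      have t := (aux_log_tendsto hW).const_mul_atBot h'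
      refine tendsto_atTop_mono' _ ?_ (tendsto_neg_atBot_atTop.comp t)
      filter_upwards [self_mem_nhdsWithin] with x hx
      have := hb1 x hx
      have : 0 ≤ C * x ^ 2 := by positivity
      simp only [Function.comp, hF]
      linarith
  have ht : Tendsto F atTop atTop := by
    refine tendsto_atTop_mono' _ ?_ ((tendsto_pow_atTop (two_ne_zero)).const_mul_atTop hC)
    filter_upwards [eventually_gt_atTop 0] with x hx
    have := hb1 x hx
    have := hb2 x hx
    simp only [hF]
    linarith
  refine ⟨hconv, ht0, ht, ?_⟩
  obtain ⟨ε, hε, hε'⟩ := mem_nhdsGT_iff_exists_Ioo_subset.1 (ht0.eventually_gt_atTop (F 1))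
  obtain ⟨M, hM⟩ := eventually_atTop.1 (ht.eventually_gt_atTop (F 1))
  simp only [Set.mem_Ioi] at hε
  have hmpos : 0 < min ε 1 := lt_min hε one_pos
  have h1mem : (1:ℝ) ∈ Set.Icc (min ε 1) (max M 1) := ⟨min_le_right _ _, le_max_right _ _⟩
  obtain ⟨x₀, hx₀, hmin⟩ := isCompact_Icc.exists_isMinOn ⟨1, h1mem⟩
    (hcont.mono fun x (hx : x ∈ Set.Icc (min ε 1) (max M 1)) => hmpos.trans_le hx.1)
  have hx₀p : 0 < x₀ := hmpos.trans_le hx₀.1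
  have hmin' : IsMinOn F (Set.Ioi 0) x₀ := by
    intro x hx
    simp only [Set.mem_Ioi] at hx
    have h1 : F x₀ ≤ F 1 := hmin h1mem
    change F x₀ ≤ F x
    by_cases hxl : x < min ε 1
    · exact h1.trans (hε' ⟨hx, hxl.trans_le (min_le_left _ _)⟩ : F 1 < F x).le
    by_cases hxr : max M 1 < x
    · exact h1.trans (hM x ((le_max_left _ _).trans hxr.le)).le
    exact hmin ⟨not_lt.1 hxl, not_lt.1 hxr⟩
  have hstrict : ∀ x, 0 < x → x ≠ x₀ → F x₀ < F x := by
    intro x hx hne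
    refine lt_of_le_of_ne (hmin' hx) fun heq => hne ?_
    refine hconv.eq_of_isMinOn (fun y hy => ?_) hmin' hx hx₀p
    change F x ≤ F y
    rw [← heq]
    exact hmin' hy
  refine ⟨x₀, ⟨hx₀p, ?_, hstrict⟩, ?_⟩
  · have := (hmin'.isLocalMin (Ioi_mem_nhds hx₀p)).hasDerivAt_eq_zero (hd x₀ hx₀p)
    linarith
  · rintro y ⟨hy, -, hy'⟩
    by_contra hne
    exact lt_asymm (hstrict y hy hne) (hy' x₀ hx₀p (Ne.symm hne))
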